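/- Let Φ, B, S ∈ M(ℂ^n) be density matrices and τ ≥ 0, δ ≥ 0, r ≥ 1. Assume ‖B − Φ‖_∞ ≤ 2τ and ‖S − Φ‖₂ ≤ ‖B − Φ‖₂, and assume that Φ is δ-almost rank r. Then ‖S − Φ‖₁ ≤ r ( (4√2 + 2)δ + 4√2 · τ ). -/

import Mathlib

noncomputable section
open Matrix Kronecker BigOperators
open scoped ComplexOrder

/-- The Frobenius (Hilbert–Schmidt) norm `‖A‖₂ = √Tr(AᴴA)` of a complex matrix. -/
def frobNorm {n : Type*} [Fintype n] (A : Matrix n n ℂ) : ℝ :=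
  Real.sqrt (Matrix.trace (Aᴴ * A)).re

/-- The operator norm `‖A‖_∞` (largest singular value) of a complex matrix. -/
def opNorm {n : Type*} [Fintype n] [DecidableEq n] (A : Matrix n n ℂ) : ℝ :=
  ‖Matrix.toEuclideanCLM (𝕜 := ℂ) A‖

/-- The positive semidefinite square root of a positive semidefinite matrix. -/
def Matrix.PosSemidef.sqrt {n 𝕜 : Type*} [Fintype n] [RCLike 𝕜] [DecidableEq n]
    {A : Matrix n n 𝕜} (hA : A.PosSemidef) : Matrix n n 𝕜 :=
  hA.1.eigenvectorUnitary.1 * diagonal ((↑) ∘ Real.sqrt ∘ hA.1.eigenvalues) *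
  (star hA.1.eigenvectorUnitary : Matrix n n 𝕜)

/-- The trace norm `‖A‖₁ = Tr √(AᴴA)` of a complex matrix. -/
def traceNorm {n : Type*} [Fintype n] [DecidableEq n] (A : Matrix n n ℂ) : ℝ :=
  ((Matrix.posSemidef_conjTranspose_mul_self A).sqrt).trace.re

/-- A density matrix: positive semidefinite with trace one. -/
def IsDensity {n : Type*} [Fintype n] (ρ : Matrix n n ℂ) : Prop :=
  ρ.PosSemidef ∧ ρ.trace = 1

/-- A density matrix `ρ` is `δ`-almost rank `r` if there is a density matrix of rank at most `r`
within operator-norm distance `δ` of it. -/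
def AlmostRank {n : Type*} [Fintype n] [DecidableEq n] (r : ℕ) (δ : ℝ) (ρ : Matrix n n ℂ) : Prop :=
  ∃ σ : Matrix n n ℂ, IsDensity σ ∧ σ.rank ≤ r ∧ opNorm (ρ - σ) ≤ δ

/-- The rank-one (outer-product) matrix `|v⟩⟨v|`. -/
def outer {n : Type*} (v : EuclideanSpace ℂ n) : Matrix n n ℂ :=
  Matrix.of fun i j => v i * (starRingEnd ℂ) (v j)

/-- Partial trace over the first tensor factor. -/
def ptrace1 {d : ℕ} (X : Matrix (Fin d × Fin d) (Fin d × Fin d) ℂ) : Matrix (Fin d) (Fin d) ℂ :=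
  Matrix.of fun j j' => ∑ i, X (i, j) (i, j')

/-- Partial trace over the second tensor factor. -/
def ptrace2 {d : ℕ} (X : Matrix (Fin d × Fin d) (Fin d × Fin d) ℂ) : Matrix (Fin d) (Fin d) ℂ :=
  Matrix.of fun i i' => ∑ j, X (i, j) (i', j)

/-- A family of `m` rank-one projectors, each given by a unit vector. -/
def IsRankOneProjFamily {d m : ℕ} (P : Fin m → Matrix (Fin d) (Fin d) ℂ) : Prop :=
  ∀ l, ∃ v : EuclideanSpace ℂ (Fin d), ‖v‖ = 1 ∧ P l = outer v

/-- Near-isotropy: `∑ l, Tr(P l · A) • P l = A + Tr(A) • 𝟙` for every `A`. -/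
def NearIsotropic {d m : ℕ} (P : Fin m → Matrix (Fin d) (Fin d) ℂ) : Prop :=
  ∀ A : Matrix (Fin d) (Fin d) ℂ,
    ∑ l, Matrix.trace (P l * A) • P l = A + Matrix.trace A • (1 : Matrix (Fin d) (Fin d) ℂ)

/-!
If `σ` is a state of rank at most `r` and `ρ` is any state, then `σ - ρ` is traceless and has at
most `r` positive eigenvalues. Its trace norm is therefore twice the sum of those eigenvalues, which
is at most `2r ‖σ - ρ‖_∞` and at most `2√r ‖σ - ρ‖₂`.

Passing through the state `σ` of rank at most `r` near `Φ`, the first bound controls `‖B - Φ‖₁`,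
hence `‖B - Φ‖₂` by `‖A‖₂² ≤ ‖A‖_∞ ‖A‖₁`; the second bound turns `‖S - Φ‖₂ ≤ ‖B - Φ‖₂` into a
bound on `‖S - Φ‖₁`.
-/

section Eigenvalues

variable {n 𝕜 : Type*} [Fintype n] [DecidableEq n] [RCLike 𝕜] {A B : Matrix n n 𝕜}

lemma trace_cfc_eq_sum_eigenvalues (hA : A.IsHermitian) (f : ℝ → ℝ) :
    (cfc f A).trace = ∑ i, (f (hA.eigenvalues i) : 𝕜) := by
  rw [hA.cfc_eq, IsHermitian.cfc, Unitary.conjStarAlgAut_apply, trace_mul_cycle,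
    Unitary.coe_star_mul_self, one_mul, trace_diagonal]
  rfl

lemma toEuclideanCLM_eigenvectorBasis (hA : A.IsHermitian) (i : n) :
    toEuclideanCLM (𝕜 := 𝕜) A (hA.eigenvectorBasis i) =
      (hA.eigenvalues i : 𝕜) • hA.eigenvectorBasis i := by
  ext1
  rw [ofLp_toEuclideanCLM, hA.mulVec_eigenvectorBasis, RCLike.real_smul_eq_coe_smul (K := 𝕜)]
  rfl

lemma inner_toEuclideanCLM_eigenvectorBasis (hA : A.IsHermitian) (i : n) :
    inner 𝕜 (hA.eigenvectorBasis i) (toEuclideanCLM (𝕜 := 𝕜) A (hA.eigenvectorBasis i)) =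
      (hA.eigenvalues i : 𝕜) := by
  rw [toEuclideanCLM_eigenvectorBasis, inner_smul_right, inner_self_eq_norm_sq_to_K,
    hA.eigenvectorBasis.norm_eq_one]
  simp

lemma inner_toEuclideanCLM_self_eq_sum (hA : A.IsHermitian) (x : EuclideanSpace 𝕜 n) :
    inner 𝕜 x (toEuclideanCLM (𝕜 := 𝕜) A x) =
      ∑ j, (hA.eigenvalues j : 𝕜) * ‖inner 𝕜 (hA.eigenvectorBasis j) x‖ ^ 2 := by
  rw [← hA.eigenvectorBasis.sum_inner_mul_inner]
  refine Finset.sum_congr rfl fun j _ => ?_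
  have hsymm : inner 𝕜 (toEuclideanCLM (𝕜 := 𝕜) A (hA.eigenvectorBasis j)) x =
      inner 𝕜 (hA.eigenvectorBasis j) (toEuclideanCLM (𝕜 := 𝕜) A x) :=
    isSymmetric_toEuclideanLin_iff.mpr hA _ x
  rw [← hsymm, toEuclideanCLM_eigenvectorBasis, inner_smul_left, RCLike.conj_ofReal,
    mul_left_comm, ← inner_conj_symm x, RCLike.conj_mul]

/-- The squared overlaps `‖⟪vⱼ, bᵢ⟫‖²` of two orthonormal bases form a doubly stochastic matrix. -/
lemma sum_norm_inner_toEuclideanCLM_le_sum_abs_eigenvalues {ι : Type*} [Fintype ι]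
    (hA : A.IsHermitian) (b : OrthonormalBasis ι 𝕜 (EuclideanSpace 𝕜 n)) :
    ∑ i, ‖inner 𝕜 (b i) (toEuclideanCLM (𝕜 := 𝕜) A (b i))‖ ≤ ∑ j, |hA.eigenvalues j| := by
  set v := hA.eigenvectorBasis
  calc ∑ i, ‖inner 𝕜 (b i) (toEuclideanCLM (𝕜 := 𝕜) A (b i))‖
      ≤ ∑ i, ∑ j, |hA.eigenvalues j| * ‖inner 𝕜 (v j) (b i)‖ ^ 2 := by
        refine Finset.sum_le_sum fun i _ => ?_
        rw [inner_toEuclideanCLM_self_eq_sum hA]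
        exact (norm_sum_le _ _).trans_eq (by simp [v])
    _ = ∑ j, |hA.eigenvalues j| * ∑ i, ‖inner 𝕜 (v j) (b i)‖ ^ 2 := by
        rw [Finset.sum_comm]
        simp only [Finset.mul_sum]
    _ = ∑ j, |hA.eigenvalues j| := by
        simp [b.sum_sq_norm_inner_left, v.norm_eq_one]

lemma conj_submatrix_eigenvectorUnitary {m : Type*} [DecidableEq m] (hA : A.IsHermitian)
    {e : m → n} (he : e.Injective) :
    ((hA.eigenvectorUnitary : Matrix n n 𝕜).submatrix id e)ᴴ * A *
      (hA.eigenvectorUnitary : Matrix n n 𝕜).submatrix id e =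
        diagonal fun i => (hA.eigenvalues (e i) : 𝕜) := by
  have h := hA.conjStarAlgAut_star_eigenvectorUnitary
  rw [Unitary.conjStarAlgAut_star_apply, star_eq_conjTranspose] at h
  exact (congrArg (submatrix · e e) h).trans (submatrix_diagonal _ _ he)

/-- Compressing `A = (A - B) + B` to the span of the eigenvectors of `A - B` with positive
eigenvalue gives a positive definite, hence invertible, matrix. -/
lemma card_pos_eigenvalues_sub_le_rank (hB : B.PosSemidef) (hAB : (A - B).IsHermitian) :
    Finset.card {i | 0 < hAB.eigenvalues i} ≤ A.rank := by
  set V : Matrix n {i // 0 < hAB.eigenvalues i} 𝕜 :=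
    (hAB.eigenvectorUnitary : Matrix n n 𝕜).submatrix id Subtype.val
  have hdiag : Vᴴ * (A - B) * V =
      diagonal fun i : {i // 0 < hAB.eigenvalues i} => (hAB.eigenvalues i : 𝕜) :=
    conj_submatrix_eigenvectorUnitary hAB Subtype.val_injective
  have hpos : (Vᴴ * A * V).PosDef := by
    have hsplit : Vᴴ * A * V = Vᴴ * (A - B) * V + Vᴴ * B * V := by
      rw [← Matrix.add_mul, ← Matrix.mul_add, sub_add_cancel]
    rw [hsplit, hdiag]
    refine PosDef.add_posSemidef (.diagonal fun i => ?_) (hB.conjTranspose_mul_mul_same V)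
    exact_mod_cast i.2
  rw [← Fintype.card_subtype, ← rank_of_isUnit _ hpos.isUnit]
  exact (rank_mul_le_left _ _).trans (rank_mul_le_right _ _)

end Eigenvalues

lemma sum_abs_eq_two_mul_sum_pos {ι : Type*} [Fintype ι] {f : ι → ℝ} (hf : ∑ i, f i = 0) :
    ∑ i, |f i| = 2 * ∑ i with 0 < f i, f i := by
  calc ∑ i, |f i| = ∑ i, (|f i| + f i) := by rw [Finset.sum_add_distrib, hf, add_zero]
    _ = ∑ i, 2 * (if 0 < f i then f i else 0) := by
        refine Finset.sum_congr rfl fun i _ => ?_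
        split_ifs with hi
        · rw [abs_of_pos hi, two_mul]
        · rw [abs_of_nonpos (not_lt.mp hi), neg_add_cancel, mul_zero]
    _ = 2 * ∑ i with 0 < f i, f i := by rw [← Finset.mul_sum, Finset.sum_filter]

section Norms

variable {n : Type*} [Fintype n] {A B : Matrix n n ℂ}

open scoped Matrix.Norms.Frobenius in
lemma frobNorm_eq_norm (A : Matrix n n ℂ) : frobNorm A = ‖A‖ := by
  rw [frobenius_norm_def, frobNorm, Real.sqrt_eq_rpow, Finset.sum_comm]
  simp [trace, mul_apply, Complex.conj_mul', ← Complex.ofReal_pow, Complex.ofReal_re]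

open scoped Matrix.Norms.Frobenius in
lemma frobNorm_sub_le (A B : Matrix n n ℂ) : frobNorm (A - B) ≤ frobNorm A + frobNorm B := by
  simpa only [frobNorm_eq_norm] using norm_sub_le A B

variable [DecidableEq n]

lemma opNorm_nonneg (A : Matrix n n ℂ) : 0 ≤ opNorm A := norm_nonneg _

lemma opNorm_sub_le (A B : Matrix n n ℂ) : opNorm (A - B) ≤ opNorm A + opNorm B := by
  simpa only [opNorm, map_sub] using norm_sub_le _ _

lemma opNorm_sub_comm (A B : Matrix n n ℂ) : opNorm (A - B) = opNorm (B - A) := by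
  simp only [opNorm, map_sub, norm_sub_rev]

lemma abs_eigenvalues_le_opNorm (hA : A.IsHermitian) (i : n) : |hA.eigenvalues i| ≤ opNorm A := by
  have h := (toEuclideanCLM (𝕜 := ℂ) A).le_opNorm (hA.eigenvectorBasis i)
  rw [toEuclideanCLM_eigenvectorBasis, norm_smul, hA.eigenvectorBasis.norm_eq_one] at h
  simpa [opNorm] using h

lemma conjTranspose_mul_self_eq_cfc_sq (hA : A.IsHermitian) :
    Aᴴ * A = cfc (fun x : ℝ => x ^ 2) A := by
  rw [cfc_pow_id A 2 hA.isSelfAdjoint, sq, hA.eq]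

lemma frobNorm_eq_sqrt_sum_sq_eigenvalues (hA : A.IsHermitian) :
    frobNorm A = √(∑ i, hA.eigenvalues i ^ 2) := by
  rw [frobNorm, conjTranspose_mul_self_eq_cfc_sq hA, trace_cfc_eq_sum_eigenvalues hA]
  simp [-Complex.ofReal_pow]

lemma sqrt_eq_cfc_sqrt (hA : A.PosSemidef) : hA.sqrt = cfc Real.sqrt A := by
  rw [hA.1.cfc_eq, IsHermitian.cfc, Unitary.conjStarAlgAut_apply]
  rfl

lemma traceNorm_eq_sum_abs_eigenvalues (hA : A.IsHermitian) :
    traceNorm A = ∑ i, |hA.eigenvalues i| := by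
  rw [traceNorm, sqrt_eq_cfc_sqrt, conjTranspose_mul_self_eq_cfc_sq hA,
    ← cfc_comp Real.sqrt (fun x : ℝ => x ^ 2) A hA.isSelfAdjoint, trace_cfc_eq_sum_eigenvalues hA]
  simp [Real.sqrt_sq_eq_abs]

lemma traceNorm_sub_le (hA : A.IsHermitian) (hB : B.IsHermitian) :
    traceNorm (A - B) ≤ traceNorm A + traceNorm B := by
  set v := (hA.sub hB).eigenvectorBasis with hv
  rw [traceNorm_eq_sum_abs_eigenvalues hA, traceNorm_eq_sum_abs_eigenvalues hB]
  calc traceNorm (A - B)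
      = ∑ i, ‖inner ℂ (v i) (toEuclideanCLM (𝕜 := ℂ) (A - B) (v i))‖ := by
        simp only [traceNorm_eq_sum_abs_eigenvalues (hA.sub hB), hv,
          inner_toEuclideanCLM_eigenvectorBasis, RCLike.norm_ofReal]
    _ ≤ ∑ i, ‖inner ℂ (v i) (toEuclideanCLM (𝕜 := ℂ) A (v i))‖ +
          ∑ i, ‖inner ℂ (v i) (toEuclideanCLM (𝕜 := ℂ) B (v i))‖ := by
        rw [← Finset.sum_add_distrib]
        refine Finset.sum_le_sum fun i _ => ?_
        rw [map_sub, _root_.sub_apply, inner_sub_right]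
        exact norm_sub_le _ _
    _ ≤ ∑ i, |hA.eigenvalues i| + ∑ i, |hB.eigenvalues i| :=
        add_le_add (sum_norm_inner_toEuclideanCLM_le_sum_abs_eigenvalues hA v)
          (sum_norm_inner_toEuclideanCLM_le_sum_abs_eigenvalues hB v)

lemma frobNorm_le_sqrt_opNorm_mul_traceNorm (hA : A.IsHermitian) :
    frobNorm A ≤ √(opNorm A * traceNorm A) := by
  rw [frobNorm_eq_sqrt_sum_sq_eigenvalues hA, traceNorm_eq_sum_abs_eigenvalues hA, Finset.mul_sum]
  gcongr with i
  rw [← sq_abs, sq]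
  gcongr
  exact abs_eigenvalues_le_opNorm hA i

lemma traceNorm_eq_two_mul_sum_pos_eigenvalues (hA : A.IsHermitian) (htr : A.trace = 0) :
    traceNorm A = 2 * ∑ i with 0 < hA.eigenvalues i, hA.eigenvalues i := by
  have hsum : ∑ i, hA.eigenvalues i = 0 := by
    rwa [hA.trace_eq_sum_eigenvalues, ← RCLike.ofReal_sum, RCLike.ofReal_eq_zero] at htr
  rw [traceNorm_eq_sum_abs_eigenvalues hA, sum_abs_eq_two_mul_sum_pos hsum]

lemma traceNorm_sub_le_rank_mul_opNorm (hA : A.IsHermitian) (hB : B.PosSemidef)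
    (htr : A.trace = B.trace) : traceNorm (A - B) ≤ 2 * (A.rank * opNorm (A - B)) := by
  have hAB := hA.sub hB.1
  rw [traceNorm_eq_two_mul_sum_pos_eigenvalues hAB (by rw [trace_sub, htr, sub_self])]
  gcongr
  calc ∑ i with 0 < hAB.eigenvalues i, hAB.eigenvalues i
      ≤ Finset.card {i | 0 < hAB.eigenvalues i} * opNorm (A - B) := by
        rw [← nsmul_eq_mul]
        exact Finset.sum_le_card_nsmul _ _ _ fun i _ =>
          (le_abs_self _).trans (abs_eigenvalues_le_opNorm hAB i)
    _ ≤ A.rank * opNorm (A - B) := by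
        gcongr
        · exact opNorm_nonneg _
        · exact card_pos_eigenvalues_sub_le_rank hB hAB

lemma traceNorm_sub_le_sqrt_rank_mul_frobNorm (hA : A.IsHermitian) (hB : B.PosSemidef)
    (htr : A.trace = B.trace) : traceNorm (A - B) ≤ 2 * (√A.rank * frobNorm (A - B)) := by
  have hAB := hA.sub hB.1
  rw [traceNorm_eq_two_mul_sum_pos_eigenvalues hAB (by rw [trace_sub, htr, sub_self]),
    frobNorm_eq_sqrt_sum_sq_eigenvalues hAB, ← Real.sqrt_mul (Nat.cast_nonneg _)]
  gcongr
  refine Real.le_sqrt_of_sq_le ?_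
  calc (∑ i with 0 < hAB.eigenvalues i, hAB.eigenvalues i) ^ 2
      ≤ Finset.card {i | 0 < hAB.eigenvalues i} *
          ∑ i with 0 < hAB.eigenvalues i, hAB.eigenvalues i ^ 2 := sq_sum_le_card_mul_sum_sq
    _ ≤ A.rank * ∑ i, hAB.eigenvalues i ^ 2 := by
        gcongr
        · exact card_pos_eigenvalues_sub_le_rank hB hAB
        · exact Finset.subset_univ _

end Norms

section Density

variable {n : Type*} [Fintype n] [DecidableEq n] {Φ ρ σ : Matrix n n ℂ} {r : ℕ} {δ : ℝ}

lemma IsDensity.traceNorm_sub_le_of_rank_le (hσ : IsDensity σ) (hρ : IsDensity ρ)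
    (hr : σ.rank ≤ r) : traceNorm (σ - ρ) ≤ 2 * (r * opNorm (σ - ρ)) := by
  refine (traceNorm_sub_le_rank_mul_opNorm hσ.1.1 hρ.1 (hσ.2.trans hρ.2.symm)).trans ?_
  gcongr
  exact opNorm_nonneg _

lemma IsDensity.traceNorm_sub_le_sqrt_of_rank_le (hσ : IsDensity σ) (hρ : IsDensity ρ)
    (hr : σ.rank ≤ r) : traceNorm (σ - ρ) ≤ 2 * (√r * frobNorm (σ - ρ)) := by
  refine (traceNorm_sub_le_sqrt_rank_mul_frobNorm hσ.1.1 hρ.1 (hσ.2.trans hρ.2.symm)).trans ?_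
  gcongr
  exact Real.sqrt_nonneg _

lemma AlmostRank.nonneg (h : AlmostRank r δ ρ) : 0 ≤ δ :=
  let ⟨_, _, _, hδ⟩ := h
  (opNorm_nonneg _).trans hδ

lemma AlmostRank.traceNorm_sub_le_opNorm (h : AlmostRank r δ Φ) (hΦ : IsDensity Φ)
    (hρ : IsDensity ρ) : traceNorm (ρ - Φ) ≤ 2 * r * (opNorm (ρ - Φ) + 2 * δ) := by
  obtain ⟨σ, hσ, hrank, hδ⟩ := h
  rw [opNorm_sub_comm] at hδ
  have hop : opNorm (σ - ρ) ≤ δ + opNorm (ρ - Φ) := by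
    rw [← sub_sub_sub_cancel_right σ ρ Φ]
    exact (opNorm_sub_le _ _).trans (by gcongr)
  calc traceNorm (ρ - Φ) = traceNorm ((σ - Φ) - (σ - ρ)) := by rw [sub_sub_sub_cancel_left]
    _ ≤ traceNorm (σ - Φ) + traceNorm (σ - ρ) :=
        traceNorm_sub_le (hσ.1.1.sub hΦ.1.1) (hσ.1.1.sub hρ.1.1)
    _ ≤ 2 * (r * opNorm (σ - Φ)) + 2 * (r * opNorm (σ - ρ)) :=
        add_le_add (hσ.traceNorm_sub_le_of_rank_le hΦ hrank)
          (hσ.traceNorm_sub_le_of_rank_le hρ hrank)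
    _ ≤ 2 * (r * δ) + 2 * (r * (δ + opNorm (ρ - Φ))) := by gcongr
    _ = 2 * r * (opNorm (ρ - Φ) + 2 * δ) := by ring

lemma AlmostRank.traceNorm_sub_le_frobNorm (h : AlmostRank r δ Φ) (hΦ : IsDensity Φ)
    (hρ : IsDensity ρ) :
    traceNorm (ρ - Φ) ≤ 2 * √r * frobNorm (ρ - Φ) + (2 + 2 * √2) * r * δ := by
  have hδ₀ := h.nonneg
  obtain ⟨σ, hσ, hrank, hδ⟩ := h
  rw [opNorm_sub_comm] at hδ
  have htrace : traceNorm (σ - Φ) ≤ 2 * (r * δ) :=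
    (hσ.traceNorm_sub_le_of_rank_le hΦ hrank).trans (by gcongr)
  have hfrob : frobNorm (σ - Φ) ≤ √2 * √r * δ := by
    calc frobNorm (σ - Φ) ≤ √(opNorm (σ - Φ) * traceNorm (σ - Φ)) :=
          frobNorm_le_sqrt_opNorm_mul_traceNorm (hσ.1.1.sub hΦ.1.1)
      _ ≤ √(δ * (2 * (r * δ))) := Real.sqrt_le_sqrt <|
          mul_le_mul_of_nonneg hδ htrace (opNorm_nonneg _) (by positivity)
      _ = √(2 * r * δ ^ 2) := by congr 1; ring
      _ = √2 * √r * δ := by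
          rw [Real.sqrt_mul (by positivity), Real.sqrt_mul zero_le_two, Real.sqrt_sq hδ₀]
  have hfrob_sub : frobNorm (σ - ρ) ≤ √2 * √r * δ + frobNorm (ρ - Φ) := by
    rw [← sub_sub_sub_cancel_right σ ρ Φ]
    exact (frobNorm_sub_le _ _).trans (by gcongr)
  calc traceNorm (ρ - Φ) = traceNorm ((σ - Φ) - (σ - ρ)) := by rw [sub_sub_sub_cancel_left]
    _ ≤ traceNorm (σ - Φ) + traceNorm (σ - ρ) :=
        traceNorm_sub_le (hσ.1.1.sub hΦ.1.1) (hσ.1.1.sub hρ.1.1)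
    _ ≤ 2 * (r * δ) + 2 * (√r * frobNorm (σ - ρ)) :=
        add_le_add htrace (hσ.traceNorm_sub_le_sqrt_of_rank_le hρ hrank)
    _ ≤ 2 * (r * δ) + 2 * (√r * (√2 * √r * δ + frobNorm (ρ - Φ))) := by gcongr
    _ = 2 * √r * frobNorm (ρ - Φ) + (2 + 2 * √2) * r * δ := by
        linear_combination 2 * √2 * δ * Real.mul_self_sqrt (Nat.cast_nonneg (α := ℝ) r)

lemma AlmostRank.frobNorm_sub_le (h : AlmostRank r δ Φ) (hΦ : IsDensity Φ)
    (hρ : IsDensity ρ) : frobNorm (ρ - Φ) ≤ √2 * √r * (opNorm (ρ - Φ) + δ) := by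
  have hop := opNorm_nonneg (ρ - Φ)
  have hδ₀ := h.nonneg
  calc frobNorm (ρ - Φ) ≤ √(opNorm (ρ - Φ) * traceNorm (ρ - Φ)) :=
        frobNorm_le_sqrt_opNorm_mul_traceNorm (hρ.1.1.sub hΦ.1.1)
    _ ≤ √(opNorm (ρ - Φ) * (2 * r * (opNorm (ρ - Φ) + 2 * δ))) := Real.sqrt_le_sqrt <|
        mul_le_mul_of_nonneg_left (h.traceNorm_sub_le_opNorm hΦ hρ) hop
    _ ≤ √(2 * r * (opNorm (ρ - Φ) + δ) ^ 2) := by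
        refine Real.sqrt_le_sqrt ?_
        linarith [mul_nonneg (Nat.cast_nonneg (α := ℝ) r) (sq_nonneg δ)]
    _ = √2 * √r * (opNorm (ρ - Φ) + δ) := by
        rw [Real.sqrt_mul (by positivity), Real.sqrt_mul zero_le_two,
          Real.sqrt_sq (by positivity)]

end Density

theorem pls_traceNorm_deterministic_bound_true_state_general {n : Type*} [Fintype n]
    [DecidableEq n] {Φ B S : Matrix n n ℂ} (hΦ : IsDensity Φ) (hB : IsDensity B)
    (hS : IsDensity S) {τ δ : ℝ} {r : ℕ} (h₁ : opNorm (B - Φ) ≤ 2 * τ)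
    (h₂ : frobNorm (S - Φ) ≤ frobNorm (B - Φ)) (h₃ : AlmostRank r δ Φ) :
    traceNorm (S - Φ) ≤ r * ((4 * √2 + 2) * δ + 4 * √2 * τ) := by
  calc traceNorm (S - Φ) ≤ 2 * √r * frobNorm (S - Φ) + (2 + 2 * √2) * r * δ :=
        h₃.traceNorm_sub_le_frobNorm hΦ hS
    _ ≤ 2 * √r * (√2 * √r * (2 * τ + δ)) + (2 + 2 * √2) * r * δ := by
        gcongr
        exact h₂.trans ((h₃.frobNorm_sub_le hΦ hB).trans (by gcongr))
    _ = r * ((4 * √2 + 2) * δ + 4 * √2 * τ) := by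
        linear_combination 2 * √2 * (2 * τ + δ) * Real.mul_self_sqrt (Nat.cast_nonneg (α := ℝ) r)

/-- deterministic trace-norm content of Theorem 4, eq. (49): if `Φ, B, S` are
density matrices, `‖B − Φ‖_∞ ≤ 2τ`, `‖S − Φ‖₂ ≤ ‖B − Φ‖₂`, and the true state `Φ` is `δ`-almost
rank `r`, then `‖S − Φ‖₁ ≤ r((4√2 + 2)δ + 4√2 τ)`. -/
theorem pls_traceNorm_deterministic_bound_true_state (n : ℕ)
    (Φ B S : Matrix (Fin n) (Fin n) ℂ)
    (hΦ : IsDensity Φ) (hB : IsDensity B) (hS : IsDensity S)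
    (τ δ : ℝ) (r : ℕ) (hτ : 0 ≤ τ) (hδ : 0 ≤ δ) (hr : 1 ≤ r)
    (h₁ : opNorm (B - Φ) ≤ 2 * τ)
    (h₂ : frobNorm (S - Φ) ≤ frobNorm (B - Φ))
    (h₃ : AlmostRank r δ Φ) :
    traceNorm (S - Φ) ≤ r * ((4 * Real.sqrt 2 + 2) * δ + 4 * Real.sqrt 2 * τ) :=
  pls_traceNorm_deterministic_bound_true_state_general hΦ hB hS h₁ h₂ h₃
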